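/- Suppose the residue field k has characteristic p ≥ 0. Let ℓ be a prime number and let L₁, L₂ ⊆ K̄ be finite separable extensions of K with [L₁:K] > 1 and [L₂:K] > 1, both of which are powers of ℓ. If L₁ and L₂ are linearly disjoint over K, i.e. [L₁L₂:K] = [L₁:K]·[L₂:K], then ℓ = p (in particular p > 0, and both extensions are wildly ramified). -/

import Mathlib

theorem Subgroup.card_mul_relIndex_of_le {G : Type*} [Group G] {H K : Subgroup G} (h : H ≤ K) :
    Nat.card H * H.relIndex K = Nat.card K := by
  simpa only [Subgroup.relIndex_bot_left] using Subgroup.relIndex_mul_relIndex ⊥ H K bot_le h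

theorem Subgroup.le_of_card_dvd_of_isCyclic {C : Type*} [Group C] [Finite C] [IsCyclic C]
    {D E : Subgroup C} (h : Nat.card D ∣ Nat.card E) : D ≤ E := by
  classical
  have := Fintype.ofFinite C
  intro x hx
  let S : Finset C := Finset.univ.filter fun c => c ^ Nat.card E = 1
  let T : Finset C := Finset.univ.filter fun c => c ∈ E
  have hTS : T ⊆ S := by
    intro c hc
    have hc : c ∈ E := by simpa [T] using hc
    simpa only [S, Finset.mem_filter, Finset.mem_univ, true_and] using
      orderOf_dvd_iff_pow_eq_one.mp (E.orderOf_dvd_natCard hc)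
  have hT : T.card = Nat.card E := by
    rw [Nat.card_eq_fintype_card, Fintype.card_subtype]
  have hS : S.card ≤ T.card := by
    rw [hT]
    exact IsCyclic.card_pow_eq_one_le Nat.card_pos
  have hxS : x ∈ S := by
    obtain ⟨m, hm⟩ := h
    have hxD := orderOf_dvd_iff_pow_eq_one.mp (D.orderOf_dvd_natCard hx)
    simp only [S, Finset.mem_filter, Finset.mem_univ, true_and, hm, pow_mul, hxD, one_pow]
  rw [← Finset.eq_of_subset_of_card_le hTS hS] at hxS
  simpa [T] using hxS

theorem Subgroup.le_of_normal_of_coprime_card_index {G : Type*} [Group G] [Finite G]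
    (H P : Subgroup G) [P.Normal] (h : (Nat.card P).Coprime H.index) : P ≤ H := by
  have h1 : Nat.card H * H.relIndex (H ⊔ P) = Nat.card ↥(H ⊔ P) :=
    Subgroup.card_mul_relIndex_of_le le_sup_left
  have h2 : Nat.card P * P.relIndex (H ⊔ P) = Nat.card ↥(H ⊔ P) :=
    Subgroup.card_mul_relIndex_of_le le_sup_right
  have h3 : Nat.card ↥(P ⊓ H) * (P ⊓ H).relIndex H = Nat.card H :=
    Subgroup.card_mul_relIndex_of_le inf_le_right
  rw [Subgroup.relIndex_sup_right] at h2
  rw [Subgroup.inf_relIndex_right] at h3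
  have hpos : 0 < P.relIndex H := Nat.pos_of_mul_pos_left (h3 ▸ Nat.card_pos)
  have hdvd : H.relIndex (H ⊔ P) ∣ Nat.card P := by
    refine ⟨Nat.card ↥(P ⊓ H), Nat.eq_of_mul_eq_mul_right hpos ?_⟩
    rw [h2, ← h1, ← h3]
    ring
  have hone := Nat.eq_one_of_dvd_coprimes h hdvd
    (Subgroup.relIndex_dvd_index_of_le le_sup_left)
  exact le_sup_right.trans (Subgroup.relIndex_eq_one.mp hone)

theorem Subgroup.index_le_one_of_index_inf_eq_mul {G R : Type*} [Group G] [Finite G]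
    [CommRing R] [IsDomain R] (χ : G →* Rˣ) {ℓ : ℕ} (hℓ : ℓ.Prime)
    (hker : ¬ ℓ ∣ Nat.card χ.ker) {H₁ H₂ : Subgroup G} {a b : ℕ}
    (h₁ : H₁.index = ℓ ^ a) (h₂ : H₂.index = ℓ ^ b)
    (hinf : (H₁ ⊓ H₂).index = H₁.index * H₂.index) : H₁.index ≤ 1 ∨ H₂.index ≤ 1 := by
  wlog hab : a ≤ b generalizing H₁ H₂ a b
  · exact (this h₂ h₁ (by rw [inf_comm, hinf, mul_comm]) (by lia)).symm
  have hle : ∀ (H : Subgroup G) (c : ℕ), H.index = ℓ ^ c → χ.ker ≤ H := fun H c hc =>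
    Subgroup.le_of_normal_of_coprime_card_index H χ.ker
      (hc ▸ (((Nat.Prime.coprime_iff_not_dvd hℓ).mpr hker).symm.pow_right c))
  have hfin : Finite χ.range := Finite.of_surjective _ χ.rangeRestrict_surjective
  have hidx : ∀ (H : Subgroup G) (c : ℕ), H.index = ℓ ^ c →
      (H.map χ.rangeRestrict).index = ℓ ^ c := fun H c hc => by
    rw [Subgroup.index_map_eq _ χ.rangeRestrict_surjective
      (by rw [MonoidHom.ker_rangeRestrict]; exact hle H c hc), hc]
  have hmap : H₂.map χ.rangeRestrict ≤ H₁.map χ.rangeRestrict := by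
    apply Subgroup.le_of_card_dvd_of_isCyclic
    have e₁ := (H₁.map χ.rangeRestrict).card_mul_index
    have e₂ := (H₂.map χ.rangeRestrict).card_mul_index
    rw [hidx H₁ a h₁] at e₁
    rw [hidx H₂ b h₂, ← e₁, ← Nat.add_sub_of_le hab, pow_add, mul_left_comm, mul_comm] at e₂
    refine ⟨ℓ ^ (b - a), (Nat.eq_of_mul_eq_mul_right (pow_pos hℓ.pos a) ?_)⟩
    exact e₂.symm
  have hH : H₂ ≤ H₁ := by
    have := Subgroup.map_le_iff_le_comap.mp hmap
    rwa [Subgroup.comap_map_eq, MonoidHom.ker_rangeRestrict, sup_of_le_left (hle H₁ a h₁)] at this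
  rw [inf_of_le_right hH] at hinf
  left
  have hpos : 0 < H₂.index := h₂ ▸ pow_pos hℓ.pos b
  nlinarith

section TameCharacter

variable {K N : Type*} [Field K] [Field N] [Algebra K N] (O : ValuationSubring N)

/-- The reduction of `σ x / x` in the residue field, for `σ` an automorphism preserving the
valuation. -/
noncomputable def residueRatio (hO : ∀ (σ : N ≃ₐ[K] N) (x : N), O.valuation (σ x) = O.valuation x)
    (σ : N ≃ₐ[K] N) : Nˣ →* (IsLocalRing.ResidueField O)ˣ :=
  ((Units.map (IsLocalRing.residue O).toMonoidHom).comp O.unitGroupMulEquiv.toMonoidHom).comp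
    ((Units.map (σ : N →* N) / MonoidHom.id Nˣ).codRestrict O.unitGroup fun x => by
      have hx : O.valuation (x : N) ≠ 0 := by simp
      simp [div_eq_mul_inv, hO, hx])

variable {O} (hO : ∀ (σ : N ≃ₐ[K] N) (x : N), O.valuation (σ x) = O.valuation x)

theorem residueRatio_eq_residue (σ : N ≃ₐ[K] N) (x : Nˣ) (h : σ x / x ∈ O) :
    (residueRatio O hO σ x : IsLocalRing.ResidueField O) = IsLocalRing.residue O ⟨σ x / x, h⟩ := by
  simp only [residueRatio, MonoidHom.comp_apply, Units.coe_map]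
  refine congrArg (IsLocalRing.residue O) (Subtype.ext ?_)
  simp [div_eq_mul_inv]

theorem div_mem_of_valuation_invariant
    (hO : ∀ (σ : N ≃ₐ[K] N) (x : N), O.valuation (σ x) = O.valuation x)
    (σ : N ≃ₐ[K] N) (x : Nˣ) : σ x / x ∈ O := by
  have hx : O.valuation (x : N) ≠ 0 := by simp
  rw [← O.valuation_le_one_iff, map_div₀, hO, div_self hx]

theorem residueRatio_eq_one_iff (σ : N ≃ₐ[K] N) (x : Nˣ) :
    residueRatio O hO σ x = 1 ↔ O.valuation (σ x - x) < O.valuation (x : N) := by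
  have hx : 0 < O.valuation (x : N) := by simp [zero_lt_iff]
  rw [← Units.val_inj, residueRatio_eq_residue hO σ x (div_mem_of_valuation_invariant hO σ x),
    Units.val_one, ← map_one (IsLocalRing.residue O), ← sub_eq_zero, ← map_sub,
    IsLocalRing.residue_eq_zero_iff, O.valuation_lt_one_iff]
  have : (((⟨σ x / x, div_mem_of_valuation_invariant hO σ x⟩ : O) - 1 : O) : N)
      = (σ x - x) / x := by
    push_cast
    field_simp
  rw [this, map_div₀, div_lt_one₀ hx]

/-- Automorphisms act trivially modulo the maximal ideal when the base field surjects onto the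
residue field. -/
theorem residueRatio_eq_one_of_mem_unitGroup
    (hres : ∀ x ∈ O, ∃ η : K, O.valuation (x - algebraMap K N η) < 1)
    (σ : N ≃ₐ[K] N) {x : Nˣ} (hx : x ∈ O.unitGroup) : residueRatio O hO σ x = 1 := by
  rw [ValuationSubring.mem_unitGroup_iff] at hx
  rw [residueRatio_eq_one_iff, hx]
  obtain ⟨η, hη⟩ := hres x ((O.valuation_le_one_iff _).mp hx.le)
  have : σ (x : N) - x = σ (x - algebraMap K N η) - (x - algebraMap K N η) := by simp
  rw [this]
  exact (O.valuation.map_sub _ _).trans_lt (max_lt (by rwa [hO]) hη)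

theorem residueRatio_mul (hres : ∀ x ∈ O, ∃ η : K, O.valuation (x - algebraMap K N η) < 1)
    (σ τ : N ≃ₐ[K] N) (x : Nˣ) :
    residueRatio O hO (σ * τ) x = residueRatio O hO σ x * residueRatio O hO τ x := by
  let u : Nˣ := Units.map (τ : N →* N) x / x
  have hu : u ∈ O.unitGroup := by
    have hx : O.valuation (x : N) ≠ 0 := by simp
    simp [u, div_eq_mul_inv, hO, hx]
  have h1 : residueRatio O hO σ (u * x) = residueRatio O hO σ x := by
    rw [map_mul, residueRatio_eq_one_of_mem_unitGroup hO hres σ hu, one_mul]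
  rw [← h1, ← Units.val_inj, Units.val_mul]
  simp only [residueRatio_eq_residue hO _ _ (div_mem_of_valuation_invariant hO _ _), ← map_mul]
  refine congrArg (IsLocalRing.residue O) (Subtype.ext ?_)
  have hτ : τ (x : N) ≠ 0 := by simp
  have : x.val ≠ 0 := x.ne_zero
  simp [u]
  field_simp

/-- The tame character `σ ↦ σ x / x` attached to a nonzero element `x`. -/
noncomputable def tameCharacter
    (hres : ∀ x ∈ O, ∃ η : K, O.valuation (x - algebraMap K N η) < 1) (x : Nˣ) :
    (N ≃ₐ[K] N) →* (IsLocalRing.ResidueField O)ˣ :=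
  MonoidHom.mk' (fun σ => residueRatio O hO σ x) fun σ τ => residueRatio_mul hO hres σ τ x

theorem residueRatio_eq_one_of_generator
    (hres : ∀ x ∈ O, ∃ η : K, O.valuation (x - algebraMap K N η) < 1) {x₀ : Nˣ}
    (hx₀ : ∀ x : Nˣ, ∃ n : ℤ, x / x₀ ^ n ∈ O.unitGroup) {σ : N ≃ₐ[K] N}
    (hσ : residueRatio O hO σ x₀ = 1) (x : Nˣ) : residueRatio O hO σ x = 1 := by
  obtain ⟨n, hn⟩ := hx₀ x
  rw [← div_mul_cancel x (x₀ ^ n), map_mul, residueRatio_eq_one_of_mem_unitGroup hO hres σ hn,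
    map_zpow, hσ, one_zpow, one_mul]

theorem not_dvd_card_ker_tameCharacter [FiniteDimensional K N]
    (hres : ∀ x ∈ O, ∃ η : K, O.valuation (x - algebraMap K N η) < 1) {x₀ : Nˣ}
    (hx₀ : ∀ x : Nˣ, ∃ n : ℤ, x / x₀ ^ n ∈ O.unitGroup) {ℓ : ℕ} (hℓ : ℓ.Prime)
    (hℓO : O.valuation (ℓ : N) = 1) :
    ¬ ℓ ∣ Nat.card (tameCharacter hO hres x₀).ker := by
  intro hdvd
  have := Fact.mk hℓ
  obtain ⟨⟨σ, hσ⟩, hord⟩ := exists_prime_orderOf_dvd_card' ℓ hdvd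
  rw [Subgroup.orderOf_mk] at hord
  have hσ : residueRatio O hO σ x₀ = 1 := hσ
  have hne : σ ≠ 1 := by
    rintro rfl
    exact hℓ.one_lt.ne' (by simpa using hord.symm)
  obtain ⟨x, hx⟩ : ∃ x, σ x ≠ x := by
    by_contra! h
    exact hne (AlgEquiv.ext h)
  let y : Nˣ := Units.mk0 (σ x - x) (sub_ne_zero.mpr hx)
  have hsum : ∑ i ∈ Finset.range ℓ, (σ ^ i) (y : N) = 0 := by
    have : ∀ i, (σ ^ i) (y : N) = (σ ^ (i + 1)) x - (σ ^ i) x := fun i => by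
      simp [y, pow_succ]
    simp only [this]
    rw [Finset.sum_range_sub (fun i => (σ ^ i) x), ← hord, pow_orderOf_eq_one]
    simp
  have hlt : O.valuation (∑ i ∈ Finset.range ℓ, ((σ ^ i) (y : N) - y)) < O.valuation (y : N) := by
    refine O.valuation.map_sum_lt (by simp) fun i _ => ?_
    rw [← residueRatio_eq_one_iff hO]
    apply residueRatio_eq_one_of_generator hO hres hx₀
    change tameCharacter hO hres x₀ (σ ^ i) = 1
    rw [map_pow, show tameCharacter hO hres x₀ σ = 1 from hσ, one_pow]
  rw [Finset.sum_sub_distrib, hsum] at hlt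
  simp [hℓO, Valuation.map_neg] at hlt

end TameCharacter

section RationalValuation

variable {N : Type*} [Field N] {v : N → ℚ}

theorem map_one_eq_zero_of_map_mul (hmul : ∀ x y : N, x ≠ 0 → y ≠ 0 → v (x * y) = v x + v y) :
    v 1 = 0 := by
  have := hmul 1 1 one_ne_zero one_ne_zero
  rw [one_mul] at this
  linarith

theorem map_neg_one_eq_zero_of_map_mul
    (hmul : ∀ x y : N, x ≠ 0 → y ≠ 0 → v (x * y) = v x + v y) : v (-1) = 0 := by
  have h := hmul (-1) (-1) (by simp) (by simp)
  rw [neg_one_mul, neg_neg, map_one_eq_zero_of_map_mul hmul] at h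
  linarith

theorem map_inv_of_map_mul (hmul : ∀ x y : N, x ≠ 0 → y ≠ 0 → v (x * y) = v x + v y)
    {x : N} (hx : x ≠ 0) : v x⁻¹ = -v x := by
  have h := hmul x x⁻¹ hx (inv_ne_zero hx)
  rw [mul_inv_cancel₀ hx, map_one_eq_zero_of_map_mul hmul] at h
  linarith

/-- The valuation subring of a rational-valued additive valuation whose value at `0` is
arbitrary. -/
def ratValuationSubring (hmul : ∀ x y : N, x ≠ 0 → y ≠ 0 → v (x * y) = v x + v y)
    (hadd : ∀ x y : N, x ≠ 0 → y ≠ 0 → x + y ≠ 0 → min (v x) (v y) ≤ v (x + y)) :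
    ValuationSubring N where
  carrier := {x | x ≠ 0 → 0 ≤ v x}
  mul_mem' {x y} hx hy hxy := by
    rw [hmul x y (left_ne_zero_of_mul hxy) (right_ne_zero_of_mul hxy)]
    exact add_nonneg (hx (left_ne_zero_of_mul hxy)) (hy (right_ne_zero_of_mul hxy))
  one_mem' _ := (map_one_eq_zero_of_map_mul hmul).ge
  add_mem' {x y} hx hy hxy := by
    by_cases hx0 : x = 0
    · subst hx0
      rw [zero_add] at hxy ⊢
      exact hy hxy
    by_cases hy0 : y = 0
    · subst hy0
      rw [add_zero] at hxy ⊢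
      exact hx hxy
    exact (le_min (hx hx0) (hy hy0)).trans (hadd x y hx0 hy0 hxy)
  zero_mem' h := absurd rfl h
  neg_mem' {x} hx h := by
    have hx0 : x ≠ 0 := neg_ne_zero.mp h
    rw [← neg_one_mul, hmul _ _ (by simp) hx0, map_neg_one_eq_zero_of_map_mul hmul, zero_add]
    exact hx hx0
  mem_or_inv_mem' x := by
    rcases le_total 0 (v x) with h | h
    · exact Or.inl fun _ => h
    · refine Or.inr fun hx => ?_
      rw [map_inv_of_map_mul hmul fun h0 => hx (inv_eq_zero.mpr h0)]
      linarith

variable (hmul : ∀ x y : N, x ≠ 0 → y ≠ 0 → v (x * y) = v x + v y)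
  (hadd : ∀ x y : N, x ≠ 0 → y ≠ 0 → x + y ≠ 0 → min (v x) (v y) ≤ v (x + y))

theorem mem_ratValuationSubring_iff {x : N} (hx : x ≠ 0) :
    x ∈ ratValuationSubring hmul hadd ↔ 0 ≤ v x :=
  ⟨fun h => h hx, fun h _ => h⟩

theorem ratValuationSubring_valuation_le_iff {x y : N} (hx : x ≠ 0) (hy : y ≠ 0) :
    (ratValuationSubring hmul hadd).valuation x ≤ (ratValuationSubring hmul hadd).valuation y ↔
      v y ≤ v x := by
  have hy' : 0 < (ratValuationSubring hmul hadd).valuation y := by simpa [zero_lt_iff] using hy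
  rw [← div_le_one₀ hy', ← map_div₀, ValuationSubring.valuation_le_one_iff,
    mem_ratValuationSubring_iff hmul hadd (div_ne_zero hx hy), div_eq_mul_inv,
    hmul _ _ hx (inv_ne_zero hy), map_inv_of_map_mul hmul hy]
  constructor <;> intro h <;> linarith

theorem ratValuationSubring_valuation_eq_iff {x y : N} (hx : x ≠ 0) (hy : y ≠ 0) :
    (ratValuationSubring hmul hadd).valuation x = (ratValuationSubring hmul hadd).valuation y ↔
      v x = v y := by
  rw [le_antisymm_iff, le_antisymm_iff (a := v x),
    ratValuationSubring_valuation_le_iff hmul hadd hx hy,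
    ratValuationSubring_valuation_le_iff hmul hadd hy hx, and_comm]

theorem ratValuationSubring_valuation_lt_one_iff {x : N} (hx : x ≠ 0) :
    (ratValuationSubring hmul hadd).valuation x < 1 ↔ 0 < v x := by
  rw [← map_one (ratValuationSubring hmul hadd).valuation, ← not_le,
    ratValuationSubring_valuation_le_iff hmul hadd one_ne_zero hx,
    map_one_eq_zero_of_map_mul hmul, not_le]

end RationalValuation

/-- A homomorphism to `ℚ` with bounded denominators has cyclic image. -/
theorem MonoidHom.exists_generator_of_int_multiple {M : Type*} [Group M]
    (f : M →* Multiplicative ℚ) {n : ℕ} (hn : n ≠ 0)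
    (h : ∀ x, ∃ m : ℤ, n * (f x).toAdd = m) :
    ∃ x₀, ∀ x, ∃ k : ℤ, f x = f x₀ ^ k := by
  choose m hm using h
  let g : Additive M →+ ℤ := AddMonoidHom.mk' (fun x => m x.toMul) fun x y => by
    have : ((m (x + y).toMul : ℤ) : ℚ) = ((m x.toMul + m y.toMul : ℤ) : ℚ) := by
      push_cast
      rw [← hm, ← hm, ← hm, toMul_add, map_mul, toAdd_mul, mul_add]
    exact_mod_cast this
  obtain ⟨a, ha⟩ := Int.subgroup_cyclic g.range
  obtain ⟨x₀, hx₀⟩ : a ∈ g.range := ha ▸ AddSubgroup.mem_closure_singleton_self a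
  refine ⟨x₀.toMul, fun x => ?_⟩
  have hx : g (Additive.ofMul x) ∈ AddSubgroup.closure {a} := ha ▸ ⟨_, rfl⟩
  obtain ⟨k, hk⟩ := AddSubgroup.mem_closure_singleton.mp hx
  refine ⟨k, Multiplicative.toAdd.injective ?_⟩
  have hn' : (n : ℚ) ≠ 0 := by exact_mod_cast hn
  apply mul_left_cancel₀ hn'
  rw [toAdd_zpow, hm, zsmul_eq_mul, mul_left_comm, hm]
  have : m x = k * m x₀.toMul := by
    rw [← hx₀, smul_eq_mul] at hk
    exact hk.symm
  rw [this]
  push_cast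
  rfl

/-- In a finite Galois extension of Henselian discretely valued fields without residue extension,
two subextensions of degree a power of a prime invertible in the residue field are linearly
disjoint only if one of them is trivial. -/
theorem finrank_le_one_of_finrank_sup_eq_mul {K N : Type*} [Field K] [Field N] [Algebra K N]
    [FiniteDimensional K N] [IsGalois K N] {v : N → ℚ}
    (hmul : ∀ x y : N, x ≠ 0 → y ≠ 0 → v (x * y) = v x + v y)
    (hadd : ∀ x y : N, x ≠ 0 → y ≠ 0 → x + y ≠ 0 → min (v x) (v y) ≤ v (x + y))
    (hgal : ∀ (σ : N ≃ₐ[K] N) (x : N), v (σ x) = v x)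
    (hint : ∀ x : K, x ≠ 0 → ∃ n : ℤ, v (algebraMap K N x) = (n : ℚ))
    (hres : ∀ x : N, x ≠ 0 → 0 ≤ v x →
      ∃ η : K, x = algebraMap K N η ∨ 0 < v (x - algebraMap K N η))
    {ℓ : ℕ} (hℓ : ℓ.Prime) (hℓ0 : (ℓ : N) ≠ 0) (hℓv : v (ℓ : N) = 0)
    {E₁ E₂ : IntermediateField K N} {a b : ℕ}
    (h₁ : Module.finrank K E₁ = ℓ ^ a) (h₂ : Module.finrank K E₂ = ℓ ^ b)
    (hsup : Module.finrank K ↥(E₁ ⊔ E₂) = Module.finrank K E₁ * Module.finrank K E₂) :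
    Module.finrank K E₁ ≤ 1 ∨ Module.finrank K E₂ ≤ 1 := by
  let O := ratValuationSubring hmul hadd
  have hO : ∀ (σ : N ≃ₐ[K] N) (x : N), O.valuation (σ x) = O.valuation x := fun σ x => by
    by_cases hx : x = 0
    · simp [hx]
    · exact (ratValuationSubring_valuation_eq_iff hmul hadd (by simpa using hx) hx).mpr (hgal σ x)
  have hOres : ∀ x ∈ O, ∃ η : K, O.valuation (x - algebraMap K N η) < 1 := fun x hx => by
    by_cases hx0 : x = 0
    · exact ⟨0, by simp [hx0]⟩
    obtain ⟨η, hη⟩ := hres x hx0 (hx hx0)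
    refine ⟨η, ?_⟩
    by_cases hxη : x - algebraMap K N η = 0
    · simp [hxη]
    · exact (ratValuationSubring_valuation_lt_one_iff hmul hadd hxη).mpr
        (hη.resolve_left fun h => hxη (sub_eq_zero.mpr h))
  let f : Nˣ →* Multiplicative ℚ := MonoidHom.mk' (fun x => Multiplicative.ofAdd (v x))
    fun x y => by rw [Units.val_mul, hmul _ _ x.ne_zero y.ne_zero, ofAdd_add]
  have hf : ∀ x : Nˣ, (f x).toAdd = v x := fun x => rfl
  obtain ⟨x₀, hx₀⟩ := f.exists_generator_of_int_multiple (n := Fintype.card (N ≃ₐ[K] N))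
    Fintype.card_ne_zero fun x => by
      obtain ⟨m, hm⟩ := hint (Algebra.norm K (x : N))
        (Algebra.norm_ne_zero_iff.mpr x.ne_zero)
      refine ⟨m, ?_⟩
      rw [← hm, Algebra.norm_eq_prod_automorphisms]
      have : ∏ σ : N ≃ₐ[K] N, σ (x : N) =
          ((∏ σ : N ≃ₐ[K] N, Units.map (σ : N →* N) x : Nˣ) : N) := by
        simp
      rw [this, ← hf, map_prod, toAdd_prod]
      simp [hf, hgal]
  have hgen : ∀ x : Nˣ, ∃ n : ℤ, x / x₀ ^ n ∈ O.unitGroup := fun x => by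
    obtain ⟨n, hn⟩ := hx₀ x
    refine ⟨n, ?_⟩
    rw [ValuationSubring.mem_unitGroup_iff, ← map_one O.valuation]
    refine (ratValuationSubring_valuation_eq_iff hmul hadd (Units.ne_zero _) one_ne_zero).mpr ?_
    rw [map_one_eq_zero_of_map_mul hmul, ← hf, map_div, map_zpow, hn, div_self', toAdd_one]
  have hℓO : O.valuation (ℓ : N) = 1 := by
    rw [← map_one O.valuation]
    exact (ratValuationSubring_valuation_eq_iff hmul hadd hℓ0 one_ne_zero).mpr
      (hℓv.trans (map_one_eq_zero_of_map_mul hmul).symm)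
  rw [IntermediateField.finrank_eq_fixingSubgroup_index] at h₁ h₂
  simp only [IntermediateField.finrank_eq_fixingSubgroup_index,
    IntermediateField.fixingSubgroup_sup] at hsup ⊢
  exact Subgroup.index_le_one_of_index_inf_eq_mul (tameCharacter hO hOres x₀) hℓ
    (not_dvd_card_ker_tameCharacter hO hOres hgen hℓ hℓO) h₁ h₂ hsup

/-- Let `K` be a field, Henselian with respect to a discrete valuation
`ν_K` with algebraically closed residue field `k`, with fixed algebraic closure `Kbar`
and (unique, Galois-invariant) extension `v` of `ν_K`, normalized so that a uniformizer
`πK` satisfies `v πK = 1` and `v` is `ℤ`-valued on `K`; algebraic closedness of the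
residue field is expressed by `hv_res`.  Suppose the residue field `k` has
characteristic `p ≥ 0`; this is encoded by `hp`: either `p = 0` and every prime `q`
is a unit of the valuation ring of `K` (nonzero of valuation `0`), or `p` is prime
and `p` lies in the maximal ideal (it is `0` in `K`, or nonzero of positive
valuation).

Let `ℓ` be a prime number and let `L₁, L₂ ⊆ Kbar` be finite separable extensions of
`K` with `[L₁:K] > 1` and `[L₂:K] > 1`, both of which are powers of `ℓ`.  If `L₁`
and `L₂` are linearly disjoint over `K`, i.e. `[L₁L₂:K] = [L₁:K]·[L₂:K]`, then
`ℓ = p`. -/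
theorem prime_eq_residue_char_of_linearly_disjoint
    {K Kbar : Type*} [Field K] [Field Kbar] [Algebra K Kbar] [IsAlgClosure K Kbar]
    (v : Kbar → ℚ)
    (hv_mul : ∀ x y : Kbar, x ≠ 0 → y ≠ 0 → v (x * y) = v x + v y)
    (hv_add : ∀ x y : Kbar, x ≠ 0 → y ≠ 0 → x + y ≠ 0 → min (v x) (v y) ≤ v (x + y))
    (hv_gal : ∀ (σ : Kbar ≃ₐ[K] Kbar) (x : Kbar), v (σ x) = v x)
    (hv_int : ∀ x : K, x ≠ 0 → ∃ n : ℤ, v (algebraMap K Kbar x) = (n : ℚ))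
    (πK : K) (hπK : πK ≠ 0 ∧ v (algebraMap K Kbar πK) = 1)
    (hv_res : ∀ x : Kbar, x ≠ 0 → 0 ≤ v x →
      ∃ η : K, x = algebraMap K Kbar η ∨ 0 < v (x - algebraMap K Kbar η))
    (p : ℕ)
    (hp : (p = 0 ∧ ∀ q : ℕ, q.Prime →
            (q : K) ≠ 0 ∧ v (algebraMap K Kbar (q : K)) = 0)
        ∨ (p.Prime ∧ ((p : K) = 0 ∨
            ((p : K) ≠ 0 ∧ 0 < v (algebraMap K Kbar ((p : K)))))))
    (ℓ : ℕ) (hℓ : ℓ.Prime)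
    (L₁ L₂ : IntermediateField K Kbar)
    [FiniteDimensional K ↥L₁] [FiniteDimensional K ↥L₂]
    [Algebra.IsSeparable K ↥L₁] [Algebra.IsSeparable K ↥L₂]
    (h1 : 1 < Module.finrank K ↥L₁) (h2 : 1 < Module.finrank K ↥L₂)
    (hpow1 : ∃ a : ℕ, Module.finrank K ↥L₁ = ℓ ^ a)
    (hpow2 : ∃ a : ℕ, Module.finrank K ↥L₂ = ℓ ^ a)
    (hdisj : Module.finrank K ↥(L₁ ⊔ L₂)
        = Module.finrank K ↥L₁ * Module.finrank K ↥L₂) :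
    ℓ = p := by
  have hone : v 1 = 0 := map_one_eq_zero_of_map_mul hv_mul
  by_contra hne
  obtain ⟨hℓ0, hℓv⟩ : (ℓ : Kbar) ≠ 0 ∧ v (ℓ : Kbar) = 0 := by
    rcases hp with ⟨-, h⟩ | ⟨hpp, h⟩
    · obtain ⟨h0, hv⟩ := h ℓ hℓ
      rw [map_natCast] at hv
      refine ⟨fun h => h0 ((algebraMap K Kbar).injective ?_), hv⟩
      rw [map_natCast, map_zero, h]
    · let O := ratValuationSubring hv_mul hv_add
      have hpO : O.valuation (p : Kbar) < 1 := by
        by_cases hp0 : (p : Kbar) = 0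
        · simp [hp0]
        · refine (ratValuationSubring_valuation_lt_one_iff hv_mul hv_add hp0).mpr ?_
          rcases h with h | ⟨-, h⟩
          · exact absurd (by rw [← map_natCast (algebraMap K Kbar), h, map_zero]) hp0
          · rwa [map_natCast] at h
      have hcop : IsCoprime (ℓ : ℤ) (p : ℤ) :=
        Nat.isCoprime_iff_coprime.mpr ((Nat.coprime_primes hℓ hpp).mpr hne)
      have hℓO : O.valuation (ℓ : Kbar) = 1 := by
        have hle : ∀ m : ℤ, O.valuation (m : Kbar) ≤ 1 := fun m =>
          (O.valuation_le_one_iff _).mpr (intCast_mem O m)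
        refine le_antisymm (by simpa only [Int.cast_natCast] using hle ℓ) (not_lt.mp fun hlt => ?_)
        obtain ⟨c, d, hcd⟩ := hcop
        have hcd' : (c : Kbar) * ℓ + d * p = 1 := by
          exact_mod_cast congrArg (Int.cast : ℤ → Kbar) hcd
        have hlt' := O.valuation.map_add_lt (x := (c : Kbar) * ℓ) (y := d * p) (g := 1)
          (by rw [map_mul]; exact (mul_le_of_le_one_left' (hle c)).trans_lt hlt)
          (by rw [map_mul]; exact (mul_le_of_le_one_left' (hle d)).trans_lt hpO)
        rw [hcd', map_one] at hlt'
        exact lt_irrefl _ hlt'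
      have hℓ0 : (ℓ : Kbar) ≠ 0 := fun h0 => by simp [h0] at hℓO
      refine ⟨hℓ0, ?_⟩
      rw [← map_one O.valuation] at hℓO
      exact ((ratValuationSubring_valuation_eq_iff hv_mul hv_add hℓ0 one_ne_zero).mp hℓO).trans hone
  have : Algebra.IsAlgebraic K Kbar := IsAlgClosure.isAlgebraic
  have : IsAlgClosed Kbar := IsAlgClosure.isAlgClosed K
  have : Normal K Kbar := inferInstance
  let N := IntermediateField.normalClosure K ↥(L₁ ⊔ L₂) Kbar
  have hsep : N ≤ separableClosure K Kbar := normalClosure_le_iff.mpr fun i => by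
    have : Algebra.IsSeparable K i.fieldRange :=
      AlgEquiv.Algebra.isSeparable (AlgEquiv.ofInjectiveField i)
    exact le_separableClosure K Kbar _
  have : Algebra.IsSeparable K N := (le_separableClosure_iff K Kbar N).mp hsep
  have : IsGalois K N := ⟨⟩
  have hN : L₁ ⊔ L₂ ≤ N := IntermediateField.le_normalClosure _
  have hN₁ : L₁ ≤ N := le_sup_left.trans hN
  have hN₂ : L₂ ≤ N := le_sup_right.trans hN
  have hrestr : ∀ {E : IntermediateField K Kbar} (h : E ≤ N),
      Module.finrank K ↥(IntermediateField.restrict h) = Module.finrank K E := fun h =>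
    (IntermediateField.restrictAlgEquiv h).toLinearEquiv.finrank_eq.symm
  have hsup : IntermediateField.restrict hN₁ ⊔ IntermediateField.restrict hN₂ =
      IntermediateField.restrict hN := by
    rw [← IntermediateField.lift_inj, IntermediateField.lift_sup, IntermediateField.lift_restrict,
      IntermediateField.lift_restrict, IntermediateField.lift_restrict]
  have hcoe : ∀ {x : N}, x ≠ 0 → (x : Kbar) ≠ 0 := fun hx h0 => hx (Subtype.ext h0)
  obtain ⟨a, ha⟩ := hpow1
  obtain ⟨b, hb⟩ := hpow2
  have key := finrank_le_one_of_finrank_sup_eq_mul (K := K) (N := N) (v := fun x => v x)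
    (fun x y hx hy => hv_mul x y (hcoe hx) (hcoe hy))
    (fun x y hx hy hxy => hv_add x y (hcoe hx) (hcoe hy) (hcoe hxy))
    (fun σ x => by
      have := AlgEquiv.liftNormal_commutes σ Kbar x
      exact (congrArg v this).symm.trans (hv_gal _ _))
    hv_int
    (fun x hx hvx => by
      obtain ⟨η, hη⟩ := hv_res x (hcoe hx) hvx
      exact ⟨η, hη.imp (fun h => Subtype.ext h) id⟩)
    hℓ (fun h0 => hℓ0 (by simpa using congrArg (Subtype.val) h0)) (by simpa using hℓv)
    (E₁ := IntermediateField.restrict hN₁) (E₂ := IntermediateField.restrict hN₂)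
    ((hrestr hN₁).trans ha) ((hrestr hN₂).trans hb)
    (by rw [hsup, hrestr, hrestr, hrestr, hdisj])
  rw [hrestr, hrestr] at key
  lia
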